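/- Let ℓ ≥ 2 and i ≥ ℓ(ℓ-1)+1 be integers, let r > 0 and X > 0 be real numbers, let α ∈ ℂ with |α| < r, and let β ∈ ℂ be arbitrary. Then (1/(2πi)) ∮_{|s|=r} X^s (β+s)^ℓ (α+s)^{-(ℓ-1)} s^{-(i+1-ℓ(ℓ-1))} ds = (1/((ℓ-2)!·(i-ℓ(ℓ-1))!)) · (d^ℓ/dx^ℓ)[ (x + log X)^{ℓ-1+i-ℓ(ℓ-1)} ∫_0^1 u^{ℓ-2} (1-u)^{i-ℓ(ℓ-1)} e^{x(β-αu)} X^{-αu} du ] evaluated at x = 0. -/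

import Mathlib

open Filter intervalIntegral

lemma feynman_aux (s α : ℂ) (h : ∀ u ∈ Set.uIcc (0:ℝ) 1, s + α * u ≠ 0) (b : ℕ) : ∀ a : ℕ,
    (∫ u in (0:ℝ)..1, (u:ℂ) ^ a * (1 - (u:ℂ)) ^ b / (s + α * u) ^ (a + b + 2))
      = (a.factorial : ℂ) * b.factorial / (a + b + 1).factorial
          / ((α + s) ^ (a + 1) * s ^ (b + 1)) := by
  have hs : s ≠ 0 := by simpa using h 0 (by simp)
  have hsα : s + α ≠ 0 := by simpa using h 1 (by simp)
  have hsα' : α + s ≠ 0 := by rwa [add_comm]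
  have hu : ∀ u : ℝ, HasDerivAt (fun u : ℝ => (u:ℂ)) 1 u := fun u =>
    (hasDerivAt_id u).ofReal_comp
  have hD : ∀ u : ℝ, HasDerivAt (fun u : ℝ => s + α * (u:ℂ)) α u := fun u => by
    simpa using ((hu u).const_mul α).const_add s
  have hcont : ∀ a b c : ℕ, IntervalIntegrable (fun u : ℝ => (u:ℂ) ^ a * (1 - (u:ℂ)) ^ b
      / (s + α * u) ^ c) MeasureTheory.volume 0 1 := fun a b c => by
    apply ContinuousOn.intervalIntegrable
    refine ContinuousOn.div (by fun_prop) (by fun_prop) (fun u hu => pow_ne_zero _ (h u hu))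
  have ht : ∀ u ∈ Set.uIcc (0:ℝ) 1,
      HasDerivAt (fun u : ℝ => (u:ℂ) / (s + α * u)) (s / (s + α * u) ^ 2) u := fun u hm => by
    exact ((hu u).div (hD u) (h u hm)).congr_deriv (by congr 1; ring)
  have hw : ∀ u ∈ Set.uIcc (0:ℝ) 1,
      HasDerivAt (fun u : ℝ => (1 - (u:ℂ)) / (s + α * u)) (-(s + α) / (s + α * u) ^ 2) u :=
      fun u hm => by
    exact (((hu u).const_sub 1).div (hD u) (h u hm)).congr_deriv (by congr 1; ring)
  induction b with
  | zero =>
    intro a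
    have key := integral_eq_sub_of_hasDerivAt
      (f := fun u : ℝ => ((u:ℂ) / (s + α * u)) ^ (a + 1))
      (f' := fun u : ℝ => ((a + 1) * s) * ((u:ℂ) ^ a * (1 - (u:ℂ)) ^ 0 / (s + α * u) ^ (a + 0 + 2)))
      (a := 0) (b := 1) (fun u hm => by
        refine ((ht u hm).pow (a + 1)).congr_deriv ?_
        have := h u hm
        push_cast
        simp only [div_pow]
        field_simp
        ring
        ) ((hcont _ _ _).const_mul _)
    rw [integral_const_mul] at key
    have ha : (a + 1 : ℂ) ≠ 0 := by exact_mod_cast Nat.succ_ne_zero a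
    have : ((a + 1) * s) ≠ 0 := mul_ne_zero ha hs
    apply mul_left_cancel₀ this
    rw [key]
    have hf : (a.factorial : ℂ) ≠ 0 := by exact_mod_cast a.factorial_ne_zero
    simp only [Nat.factorial_succ, Nat.factorial_zero, add_zero]
    push_cast
    simp
    field_simp
    rw [add_comm s α]
  | succ b ih =>
    intro a
    have key := integral_eq_sub_of_hasDerivAt
      (f := fun u : ℝ => ((u:ℂ) / (s + α * u)) ^ (a + 1) * ((1 - (u:ℂ)) / (s + α * u)) ^ (b + 1))
      (f' := fun u : ℝ => ((a + 1) * s) * ((u:ℂ) ^ a * (1 - (u:ℂ)) ^ (b + 1)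
          / (s + α * u) ^ (a + (b + 1) + 2))
        - ((b + 1) * (s + α)) * ((u:ℂ) ^ (a + 1) * (1 - (u:ℂ)) ^ b
          / (s + α * u) ^ (a + 1 + b + 2)))
      (a := 0) (b := 1) (fun u hm => by
        refine (((ht u hm).pow (a + 1)).mul ((hw u hm).pow (b + 1))).congr_deriv ?_
        have := h u hm
        push_cast
        simp only [div_pow, Pi.pow_apply]
        field_simp
        ring
        ) (((hcont _ _ _).const_mul _).sub ((hcont _ _ _).const_mul _))
    rw [integral_sub ((hcont _ _ _).const_mul _) ((hcont _ _ _).const_mul _),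
      integral_const_mul, integral_const_mul, ih] at key
    have ha : (a + 1 : ℂ) ≠ 0 := by exact_mod_cast Nat.succ_ne_zero a
    have : ((a + 1) * s) ≠ 0 := mul_ne_zero ha hs
    apply mul_left_cancel₀ this
    rw [sub_eq_iff_eq_add.1 key]
    have hf : ((a + 1 + b + 1).factorial : ℂ) ≠ 0 := by exact_mod_cast Nat.factorial_ne_zero _
    rw [show a + (b + 1) + 1 = a + 1 + b + 1 by ring, Nat.factorial_succ a, Nat.factorial_succ b,
      add_comm s α]
    push_cast
    simp
    field_simp
    ring

lemma cauchy_exp_aux (r : ℝ) (hr : 0 < r) (w T : ℂ) (hw : ‖w‖ < r) (N : ℕ) :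
    (∮ s in C(0, r), Complex.exp (s * T) / (s - w) ^ (N + 1))
      = 2 * Real.pi * Complex.I * (T ^ N / N.factorial * Complex.exp (w * T)) := by
  have hne : ∀ s ∈ Metric.sphere (0:ℂ) r, s - w ≠ 0 := by
    intro s hs h0
    rw [sub_eq_zero] at h0
    subst h0
    simp at hs
    linarith
  have hint : ∀ N : ℕ, CircleIntegrable (fun s => Complex.exp (s * T) / (s - w) ^ N) 0 r := fun N => by
    apply ContinuousOn.circleIntegrable hr.le
    exact ContinuousOn.div (by fun_prop) (by fun_prop) (fun u hu => pow_ne_zero _ (hne u hu))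
  induction N with
  | zero =>
    have := DiffContOnCl.circleIntegral_sub_inv_smul (R := r) (c := 0) (w := w)
      (f := fun s => Complex.exp (s * T)) (Differentiable.diffContOnCl (by fun_prop)) (by simpa using hw)
    simp only [smul_eq_mul] at this
    simp only [zero_add, pow_one, pow_zero, Nat.factorial_zero, Nat.cast_one, div_one, one_mul]
    rw [← this]
    congr 1; ext s; ring
  | succ N ih =>
    have key := circleIntegral.integral_eq_zero_of_hasDerivWithinAt (c := 0) hr.le
      (f := fun s => Complex.exp (s * T) / (s - w) ^ (N + 1))
      (f' := fun s => T * (Complex.exp (s * T) / (s - w) ^ (N + 1))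
        - (N + 1) * (Complex.exp (s * T) / (s - w) ^ (N + 1 + 1))) (fun s hs => by
        have h0 := hne s hs
        apply HasDerivAt.hasDerivWithinAt
        refine ((((hasDerivAt_id s).mul_const T).cexp).div
          (((hasDerivAt_id s).sub_const w).pow (N + 1)) (pow_ne_zero _ h0)).congr_deriv ?_
        simp
        field_simp
        ring)
    rw [circleIntegral.integral_sub, circleIntegral.integral_const_mul,
      circleIntegral.integral_const_mul, ih] at key
    · have ha : (N + 1 : ℂ) ≠ 0 := by exact_mod_cast Nat.succ_ne_zero N
      apply mul_left_cancel₀ ha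
      rw [← sub_eq_zero.1 key, Nat.factorial_succ]
      have hf : (N.factorial : ℂ) ≠ 0 := by exact_mod_cast Nat.factorial_ne_zero _
      push_cast
      field_simp
      ring
    · exact (hint (N + 1)).const_smul (a := T)
    · exact (hint (N + 1 + 1)).const_smul (a := (N + 1 : ℂ))

lemma iteratedDeriv_exp_integral (a b : ℝ) (c g : ℝ → ℂ) (hc : Continuous c) (hg : Continuous g)
    (n : ℕ) :
    iteratedDeriv n (fun x : ℂ => ∫ t in a..b, Complex.exp (x * c t) * g t)
      = fun x : ℂ => ∫ t in a..b, Complex.exp (x * c t) * (c t ^ n * g t) := by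
  induction n with
  | zero => simp
  | succ n ih =>
    rw [iteratedDeriv_succ, ih]
    ext x
    refine (HasDerivAt.deriv ?_)
    refine (intervalIntegral.hasDerivAt_integral_of_dominated_loc_of_deriv_le
      (F' := fun x t => Complex.exp (x * c t) * (c t ^ (n + 1) * g t))
      (bound := fun t => Real.exp ((‖x‖ + 1) * ‖c t‖) * ‖c t ^ (n + 1) * g t‖)
      (Metric.ball_mem_nhds x one_pos) ?_ ?_ ?_ ?_ ?_ ?_).2
    · exact Eventually.of_forall fun y => Continuous.aestronglyMeasurable (by fun_prop)
    · exact Continuous.intervalIntegrable (by fun_prop) _ _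
    · exact Continuous.aestronglyMeasurable (by fun_prop)
    · refine Eventually.of_forall fun t _ y hy => ?_
      rw [norm_mul, Complex.norm_exp]
      gcongr
      refine (Complex.re_le_norm _).trans ?_
      rw [norm_mul]
      gcongr
      have := norm_sub_norm_le y x
      rw [Metric.mem_ball, dist_eq_norm] at hy
      linarith
    · exact Continuous.intervalIntegrable (by fun_prop) _ _
    · refine Eventually.of_forall fun t _ y hy => ?_
      refine ((((hasDerivAt_id y).mul_const (c t)).cexp).mul_const (c t ^ n * g t)).congr_deriv ?_
      simp
      ring

lemma contour_eval (r : ℝ) (hr : 0 < r) (α T : ℂ) (hα : ‖α‖ < r) (a b : ℕ) :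
    (∮ s in C(0, r), Complex.exp (s * T) / ((α + s) ^ (a + 1) * s ^ (b + 1)))
      = 2 * Real.pi * Complex.I / (a.factorial * b.factorial) * (T ^ (a + b + 1) *
        ∫ u in (0:ℝ)..1, (u:ℂ) ^ a * (1 - (u:ℂ)) ^ b * Complex.exp (-α * u * T)) := by
  have hαu : ∀ u ∈ Set.uIcc (0:ℝ) 1, ‖-α * (u:ℂ)‖ < r := fun u hu => by
    rw [Set.uIcc_of_le zero_le_one] at hu
    rw [norm_mul, norm_neg, Complex.norm_real, Real.norm_of_nonneg hu.1]
    nlinarith [norm_nonneg α, hu.1, hu.2]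
  have hne : ∀ s : ℂ, ‖s‖ = r → ∀ u ∈ Set.uIcc (0:ℝ) 1, s + α * u ≠ 0 := fun s hs u hu h0 => by
    have := hαu u hu
    rw [show -α * (u:ℂ) = s by linear_combination -h0] at this
    linarith
  have hm : ∀ θ, ‖circleMap 0 r θ‖ = r := fun θ => by simp [abs_of_pos hr]
  have hfa : (a.factorial : ℂ) ≠ 0 := by exact_mod_cast a.factorial_ne_zero
  have hfb : (b.factorial : ℂ) ≠ 0 := by exact_mod_cast b.factorial_ne_zero
  have hfc : ((a + b + 1).factorial : ℂ) ≠ 0 := by exact_mod_cast Nat.factorial_ne_zero _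
  set K : ℂ := (a + b + 1).factorial / (a.factorial * b.factorial) with hK
  have h1 : (∮ s in C(0, r), Complex.exp (s * T) / ((α + s) ^ (a + 1) * s ^ (b + 1)))
      = ∮ s in C(0, r), K * ∫ u in (0:ℝ)..1, Complex.exp (s * T) *
        ((u:ℂ) ^ a * (1 - (u:ℂ)) ^ b / (s + α * u) ^ (a + b + 2)) := by
    refine circleIntegral.integral_congr hr.le fun s hs => ?_
    have hs' : ‖s‖ = r := by simpa using hs
    rw [integral_const_mul, feynman_aux s α (hne s hs') b a, hK]
    field_simp
  rw [h1, circleIntegral.integral_const_mul]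
  have h2 : (∮ s in C(0, r), ∫ u in (0:ℝ)..1, Complex.exp (s * T) *
        ((u:ℂ) ^ a * (1 - (u:ℂ)) ^ b / (s + α * u) ^ (a + b + 2)))
      = ∫ u in (0:ℝ)..1, ∮ s in C(0, r), Complex.exp (s * T) *
        ((u:ℂ) ^ a * (1 - (u:ℂ)) ^ b / (s + α * u) ^ (a + b + 2)) := by
    simp only [circleIntegral, smul_eq_mul, ← integral_const_mul, deriv_circleMap]
    apply MeasureTheory.intervalIntegral_intervalIntegral_swap
    refine MeasureTheory.IntegrableOn.mono_set (t := Set.uIcc 0 (2 * Real.pi) ×ˢ Set.uIcc (0:ℝ) 1) ?_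
      (Set.prod_mono Set.uIoc_subset_uIcc Set.uIoc_subset_uIcc)
    apply ContinuousOn.integrableOn_compact (isCompact_uIcc.prod isCompact_uIcc)
    unfold Function.uncurry
    have hcm : Continuous fun p : ℝ × ℝ => circleMap 0 r p.1 :=
      (continuous_circleMap 0 r).comp continuous_fst
    refine ContinuousOn.mul (by fun_prop) (ContinuousOn.mul (by fun_prop)
      (ContinuousOn.div (by fun_prop) (by fun_prop) ?_))
    intro p hp
    exact pow_ne_zero _ (hne _ (hm _) _ hp.2)
  rw [h2]
  have h3 : ∀ u ∈ Set.uIcc (0:ℝ) 1, (∮ s in C(0, r), Complex.exp (s * T) *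
        ((u:ℂ) ^ a * (1 - (u:ℂ)) ^ b / (s + α * u) ^ (a + b + 2)))
      = (2 * Real.pi * Complex.I * T ^ (a + b + 1) / (a + b + 1).factorial) *
        ((u:ℂ) ^ a * (1 - (u:ℂ)) ^ b * Complex.exp (-α * u * T)) := fun u hu => by
    have := cauchy_exp_aux r hr (-α * u) T (hαu u hu) (a + b + 1)
    calc _ = ∮ s in C(0, r), ((u:ℂ) ^ a * (1 - (u:ℂ)) ^ b) *
          (Complex.exp (s * T) / (s - -α * u) ^ (a + b + 1 + 1)) := by
          congr 1; ext s
          rw [show s - -α * (u:ℂ) = s + α * u by ring]; ring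
      _ = _ := by
          rw [circleIntegral.integral_const_mul, this]; ring
  rw [integral_congr h3, integral_const_mul, hK]
  generalize (∫ u in (0:ℝ)..1, (u:ℂ) ^ a * (1 - (u:ℂ)) ^ b * Complex.exp (-α * u * T)) = J
  field_simp

/-- For integers `ℓ ≥ 2`, `i ≥ ℓ(ℓ-1)+1`, reals `r, X > 0`, `α ∈ ℂ` with
`|α| < r` and arbitrary `β ∈ ℂ`:
`(1/(2πi)) ∮_{|s|=r} X^s (β+s)^ℓ (α+s)^{-(ℓ-1)} s^{-(i+1-ℓ(ℓ-1))} ds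
  = (1/((ℓ-2)!·(i-ℓ(ℓ-1))!)) · d^ℓ/dx^ℓ [ (x+log X)^{ℓ-1+i-ℓ(ℓ-1)}
      ∫₀¹ u^{ℓ-2}(1-u)^{i-ℓ(ℓ-1)} e^{x(β-αu)} X^{-αu} du ] |_{x=0}`. -/
theorem circleIntegral_shifted_pow_eq_iteratedDeriv
    (ℓ i : ℕ) (hℓ : 2 ≤ ℓ) (hi : ℓ * (ℓ - 1) + 1 ≤ i) (r X : ℝ) (hr : 0 < r) (hX : 0 < X)
    (α β : ℂ) (hα : ‖α‖ < r) :
    (1 / (2 * (Real.pi : ℂ) * Complex.I)) *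
        (∮ s in C(0, r),
          Complex.exp (s * Real.log X) * (β + s) ^ ℓ
            / ((α + s) ^ (ℓ - 1) * s ^ ((i - ℓ * (ℓ - 1)) + 1)))
      = ((1 / ((Nat.factorial (ℓ - 2) : ℝ) * (Nat.factorial (i - ℓ * (ℓ - 1)) : ℝ)) : ℝ) : ℂ)
          * iteratedDeriv ℓ
              (fun x : ℂ =>
                (x + (Real.log X : ℂ)) ^ (ℓ - 1 + (i - ℓ * (ℓ - 1)))
                  * ∫ u in (0:ℝ)..1,
                      ((u ^ (ℓ - 2) * (1 - u) ^ (i - ℓ * (ℓ - 1)) : ℝ) : ℂ)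
                        * Complex.exp (x * (β - α * u))
                        * Complex.exp (-α * u * Real.log X)) 0 := by
  obtain ⟨m, rfl⟩ : ∃ m, ℓ = m + 2 := ⟨ℓ - 2, by omega⟩
  generalize i - (m + 2) * (m + 2 - 1) = n
  simp only [show m + 2 - 1 = m + 1 by omega, show m + 2 - 2 = m by omega]
  generalize (Real.log X : ℂ) = L
  have hfm : (m.factorial : ℂ) ≠ 0 := by exact_mod_cast m.factorial_ne_zero
  have hfn : (n.factorial : ℂ) ≠ 0 := by exact_mod_cast n.factorial_ne_zero
  have hpi : (Real.pi : ℂ) ≠ 0 := by exact_mod_cast Real.pi_ne_zero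
  have hI := Complex.I_ne_zero
  set C : ℂ := m.factorial * n.factorial / (2 * Real.pi * Complex.I) with hC
  have hm : ∀ θ, ‖circleMap 0 r θ‖ = r := fun θ => by simp [abs_of_pos hr]
  set g : ℝ → ℂ := fun θ => C * (circleMap 0 r θ * Complex.I * (Complex.exp (circleMap 0 r θ * L)
    / ((α + circleMap 0 r θ) ^ (m + 1) * circleMap 0 r θ ^ (n + 1)))) with hg
  have hcm := continuous_circleMap 0 r
  have hgc : Continuous g := by
    refine continuous_const.mul (Continuous.mul (by fun_prop) (Continuous.div (by fun_prop)
      (by fun_prop) fun θ => mul_ne_zero (pow_ne_zero _ fun h0 => ?_) (pow_ne_zero _ fun h0 => ?_)))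
    · have := hm θ
      rw [show circleMap 0 r θ = -α by linear_combination h0, norm_neg] at this
      linarith
    · have := hm θ
      rw [h0, norm_zero] at this
      linarith
  have hF : (fun x : ℂ => (x + L) ^ (m + 1 + n) * ∫ u in (0:ℝ)..1,
      ((u ^ m * (1 - u) ^ n : ℝ) : ℂ) * Complex.exp (x * (β - α * u)) * Complex.exp (-α * u * L))
      = fun x : ℂ => ∫ θ in (0:ℝ)..(2 * Real.pi),
        Complex.exp (x * (β + circleMap 0 r θ)) * g θ := by
    ext x
    have h1 : (∫ u in (0:ℝ)..1,
        ((u ^ m * (1 - u) ^ n : ℝ) : ℂ) * Complex.exp (x * (β - α * u)) * Complex.exp (-α * u * L))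
        = Complex.exp (x * β) * ∫ u in (0:ℝ)..1,
          (u:ℂ) ^ m * (1 - (u:ℂ)) ^ n * Complex.exp (-α * u * (x + L)) := by
      rw [← integral_const_mul]
      congr 1; ext u
      rw [show -α * u * (x + L) = -α * u * x + -α * u * L by ring,
        show x * (β - α * u) = x * β + -α * u * x by ring, Complex.exp_add, Complex.exp_add]
      push_cast
      ring
    have h2 : (∫ θ in (0:ℝ)..(2 * Real.pi), Complex.exp (x * (β + circleMap 0 r θ)) * g θ)
        = (Complex.exp (x * β) * C) * ∮ s in C(0, r),
          Complex.exp (s * (x + L)) / ((α + s) ^ (m + 1) * s ^ (n + 1)) := by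
      simp only [circleIntegral, smul_eq_mul, ← integral_const_mul, deriv_circleMap]
      congr 1; ext θ
      rw [hg]
      simp only [mul_add, Complex.exp_add]
      rw [mul_comm x (circleMap 0 r θ)]
      ring
    rw [h1, h2, contour_eval r hr α (x + L) hα m n, hC]
    generalize (∫ u in (0:ℝ)..1,
          (u:ℂ) ^ m * (1 - (u:ℂ)) ^ n * Complex.exp (-α * u * (x + L))) = J
    rw [show m + 1 + n = m + n + 1 by ring]
    field_simp
  rw [hF, iteratedDeriv_exp_integral _ _ _ _ (by fun_prop) hgc]
  simp only [circleIntegral, smul_eq_mul, ← integral_const_mul, deriv_circleMap]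
  congr 1; ext θ
  rw [hg, hC]
  simp only [zero_mul, Complex.exp_zero]
  push_cast
  field_simp
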